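/- Let S be a standard graded polynomial ring and 0 → A → J → E → 0 a short exact sequence of finitely generated graded S-modules, where A has a pure linear resolution with degree sequence (k+1, k+2, ..., k+N) and E has minimal degree sequence with min{j : β_{i,j}(E) ≠ 0} > k+1+i for every i. Then β_{i,j}(J) = β_{i,j}(A) + β_{i,j}(E) for all i, j. In particular reg(J) = max(reg(A), reg(E)). -/

import Mathlib

/-!
The connecting maps `Tor_{i+1}(E, ℂ)_j → Tor_i(A, ℂ)_j` vanish for degree reasons: the source
lives in degrees `j > k + 2 + i` and the target in degree `j = k + 1 + i`. The proof carries this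
out on minimal resolutions, one syzygy at a time.

Let `A` be generated in degree `k` and `E` in degrees `> k`. Lifting the covers of `A` and `E` to
the minimal cover of `J` gives a graded map `Φ : F_A ⊕ F_E → F_J`. By minimality it is bijective
modulo the irrelevant ideal (injectivity on the `F_A` part uses that `F_J` lives in degrees `≥ k`),
so the numbers of generators add up degree by degree (`card_eq_of_iso_mod`), and `Φ` is a graded
isomorphism by graded Nakayama (`exists_homF_preimage`) and the Orzech property
(`injective_of_iso_mod`). Therefore the first syzygies form a short exact sequence with the same
properties in degree `k + 1` (`horseshoe_step`), and induction gives `betti_add`.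

The regularity is a supremum in `ℤ`, which has the intended value only for a set that is bounded
above, so Hilbert's syzygy theorem is needed (`betti_eq_zero`). It is obtained by reducing a
resolution modulo one variable after another: each variable is a nonzerodivisor on the complex
reduced so far, so homology spreads by at most one degree (`exact_mod_firstVars`). Modulo all `m`
variables the differential of a minimal resolution is zero, so the steps beyond `m` vanish.
-/

open MvPolynomial DirectSum

noncomputable section

/-- The standard graded polynomial ring `ℂ[x_1,…,x_m]`. -/
abbrev PolyS (m : ℕ) : Type := MvPolynomial (Fin m) ℂ

/-- The degree-`e` homogeneous piece of the polynomial ring (zero for `e < 0`). -/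
def hpiece (m : ℕ) (e : ℤ) : Submodule ℂ (PolyS m) :=
  if 0 ≤ e then homogeneousSubmodule (Fin m) ℂ e.toNat else ⊥

/-- The graded free module `⊕_j S(-j)^{b j}`. -/
abbrev FreeMod (m : ℕ) (b : ℤ → ℕ) : Type :=
  DirectSum ℤ (fun j : ℤ => Fin (b j) → PolyS m)

/-- The degree-`deg` homogeneous piece of the graded free module `⊕_j S(-j)^{b j}`. -/
def freePiece (m : ℕ) (b : ℤ → ℕ) (deg : ℤ) : Submodule ℂ (FreeMod m b) where
  carrier := {x | ∀ (j : ℤ) (i : Fin (b j)), x j i ∈ hpiece m (deg - j)}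
  add_mem' := by
    intro x y hx hy j i
    simp only [DirectSum.add_apply, Pi.add_apply]
    exact add_mem (hx j i) (hy j i)
  zero_mem' := by
    intro j i
    simp only [DirectSum.zero_apply, Pi.zero_apply]
    exact zero_mem _
  smul_mem' := by
    intro c x hx j i
    simp only [DirectSum.smul_apply, Pi.smul_apply]
    exact Submodule.smul_mem _ c (hx j i)

/-- The irrelevant maximal ideal `(x_1,…,x_m)`. -/
def mIdeal (m : ℕ) : Ideal (PolyS m) := Ideal.span (Set.range (X : Fin m → PolyS m))

/-- A (ℤ-)grading on an `S`-module, compatible with the standard grading of `S`. -/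
structure GradedSMod (m : ℕ) (M : Type) [AddCommGroup M] [Module ℂ M]
    [Module (PolyS m) M] [IsScalarTower ℂ (PolyS m) M] where
  piece : ℤ → Submodule ℂ M
  internal : DirectSum.IsInternal piece
  smul_mem : ∀ (d : ℕ) (p : PolyS m), p ∈ homogeneousSubmodule (Fin m) ℂ d →
    ∀ (j : ℤ) (x : M), x ∈ piece j → p • x ∈ piece (d + j)

/-- A minimal graded free resolution of a graded module `M`, recorded together with
its graded Betti numbers `b i j`. -/
structure MinFreeRes (m : ℕ) (M : Type) [AddCommGroup M] [Module ℂ M]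
    [Module (PolyS m) M] [IsScalarTower ℂ (PolyS m) M] (gM : GradedSMod m M) where
  b : ℕ → ℤ → ℕ
  bfin : ∀ i, (Function.support (b i)).Finite
  diff : ∀ i : ℕ, FreeMod m (b (i + 1)) →ₗ[PolyS m] FreeMod m (b i)
  aug : FreeMod m (b 0) →ₗ[PolyS m] M
  aug_surjective : Function.Surjective aug
  exact_aug : LinearMap.ker aug = LinearMap.range (diff 0)
  exact : ∀ i, LinearMap.ker (diff i) = LinearMap.range (diff (i + 1))
  graded_diff : ∀ (i : ℕ) (deg : ℤ) (x : FreeMod m (b (i + 1))),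
    x ∈ freePiece m (b (i + 1)) deg → diff i x ∈ freePiece m (b i) deg
  graded_aug : ∀ (deg : ℤ) (x : FreeMod m (b 0)),
    x ∈ freePiece m (b 0) deg → aug x ∈ gM.piece deg
  minimal : ∀ (i : ℕ) (x : FreeMod m (b (i + 1))),
    diff i x ∈ (mIdeal m) • (⊤ : Submodule (PolyS m) (FreeMod m (b i)))

/-- `tmax c` : the largest degree `j` with `c j ≠ 0` (the `i`-th entry of the maximal
degree sequence, when `c = b i`). -/
def tmax (c : ℤ → ℕ) : ℤ := sSup {j | c j ≠ 0}

/-- The Castelnuovo–Mumford regularity read off from a Betti table. -/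
def regOf (b : ℕ → ℤ → ℕ) : ℤ := sSup {z | ∃ i j, b i j ≠ 0 ∧ z = j - (i : ℤ)}


/-- The grading on (the underlying module of) a homogeneous ideal `J` induced from the
standard grading of the polynomial ring. -/
def NatIdealGrading (m : ℕ) (J : Ideal (PolyS m)) (g : GradedSMod m ↥J) : Prop :=
  ∀ (j : ℤ) (x : ↥J), x ∈ g.piece j ↔ (x : PolyS m) ∈ hpiece m j

/-- The ideal `I = (y_1,…,y_N)` inside `S = ℂ[x_0,…,x_n,y_1,…,y_N]`, where the last `N`
variables are the `y`'s. -/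
def yIdeal (n N : ℕ) : Ideal (PolyS (n + 1 + N)) :=
  Ideal.span {p | ∃ i : Fin (n + 1 + N), n + 1 ≤ (i : ℕ) ∧ p = X i}

/-- Cohen–Macaulayness of a module with minimal free resolution `F` of length `r`,
expressed through the standard characterization: `Ext^i(M, S) = 0` for `i < r = pd M`,
i.e. the dual of the minimal free resolution is exact except at the last spot. -/
def IsCMres (m : ℕ) {M : Type} [AddCommGroup M] [Module ℂ M]
    [Module (PolyS m) M] [IsScalarTower ℂ (PolyS m) M] {gM : GradedSMod m M}
    (F : MinFreeRes m M gM) (r : ℕ) : Prop :=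
  (0 < r → LinearMap.ker (F.diff 0).dualMap = ⊥) ∧
  ∀ i, i + 1 < r →
    LinearMap.ker ((F.diff (i + 1)).dualMap) = LinearMap.range ((F.diff i).dualMap)

/-- A bundled graded module over `ℂ[x_1,…,x_m]`. -/
structure GradedModuleBundle (m : ℕ) where
  carrier : Type
  [isAddCommGroup : AddCommGroup carrier]
  [isModC : Module ℂ carrier]
  [isModS : Module (PolyS m) carrier]
  [isTower : IsScalarTower ℂ (PolyS m) carrier]
  grading : GradedSMod m carrier

attribute [instance] GradedModuleBundle.isAddCommGroup GradedModuleBundle.isModC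
  GradedModuleBundle.isModS GradedModuleBundle.isTower

/-! ### Homogeneous polynomials indexed by integers -/

lemma mem_hpiece_of_nonneg {m : ℕ} {e : ℤ} (he : 0 ≤ e) {p : PolyS m} :
    p ∈ hpiece m e ↔ p.IsHomogeneous e.toNat := by
  simp [hpiece, he, mem_homogeneousSubmodule]

lemma eq_zero_of_mem_hpiece {m : ℕ} {e : ℤ} (he : e < 0) {p : PolyS m}
    (hp : p ∈ hpiece m e) : p = 0 := by
  simpa [hpiece, not_le.mpr he] using hp

lemma mul_mem_hpiece {m : ℕ} {a b : ℤ} {p q : PolyS m} (hp : p ∈ hpiece m a)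
    (hq : q ∈ hpiece m b) : p * q ∈ hpiece m (a + b) := by
  rcases lt_or_ge a 0 with ha | ha
  · rw [eq_zero_of_mem_hpiece ha hp, zero_mul]; exact zero_mem _
  rcases lt_or_ge b 0 with hb | hb
  · rw [eq_zero_of_mem_hpiece hb hq, mul_zero]; exact zero_mem _
  rw [mem_hpiece_of_nonneg ha] at hp
  rw [mem_hpiece_of_nonneg hb] at hq
  rw [mem_hpiece_of_nonneg (by omega), Int.toNat_add ha hb]
  exact hp.mul hq

lemma C_mem_hpiece (m : ℕ) (c : ℂ) : (C c : PolyS m) ∈ hpiece m 0 := by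
  rw [mem_hpiece_of_nonneg le_rfl]
  exact isHomogeneous_C _ _

lemma one_mem_hpiece (m : ℕ) : (1 : PolyS m) ∈ hpiece m 0 := by
  simpa using C_mem_hpiece m 1

lemma eq_zero_of_mem_hpiece_of_constantCoeff {m : ℕ} {e : ℤ} (he : e ≤ 0) {p : PolyS m}
    (hp : p ∈ hpiece m e) (hc : constantCoeff p = 0) : p = 0 := by
  rcases lt_or_eq_of_le he with h | rfl
  · exact eq_zero_of_mem_hpiece h hp
  · rw [mem_hpiece_of_nonneg le_rfl] at hp
    have h1 := totalDegree_eq_zero_iff_eq_C.mp (Nat.le_zero.mp hp.totalDegree_le)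
    rw [h1, ← constantCoeff_eq, hc, C_0]

lemma constantCoeff_eq_zero_of_mem_hpiece {m : ℕ} {e : ℤ} (he : e ≠ 0) {p : PolyS m}
    (hp : p ∈ hpiece m e) : constantCoeff p = 0 := by
  rcases lt_or_ge e 0 with h | h
  · rw [eq_zero_of_mem_hpiece h hp, map_zero]
  · rw [mem_hpiece_of_nonneg h] at hp
    rw [constantCoeff_eq]
    exact hp.coeff_eq_zero (by simp; omega)

/-- The projection of a polynomial onto its homogeneous component of integral degree `e`
(zero for `e < 0`). -/
def hproj (m : ℕ) (e : ℤ) : PolyS m →+ PolyS m :=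
  if 0 ≤ e then (homogeneousComponent e.toNat : PolyS m →ₗ[ℂ] PolyS m).toAddMonoidHom else 0

lemma hproj_same {m : ℕ} {e : ℤ} {p : PolyS m} (hp : p ∈ hpiece m e) : hproj m e p = p := by
  rcases lt_or_ge e 0 with h | h
  · rw [eq_zero_of_mem_hpiece h hp, map_zero]
  · have hp' := hp
    rw [mem_hpiece_of_nonneg h] at hp'
    simp only [hproj, h, if_true]
    exact (homogeneousComponent_of_mem (m := e.toNat) hp').trans (if_pos rfl)

lemma hproj_other {m : ℕ} {e e' : ℤ} (hne : e ≠ e') {p : PolyS m} (hp : p ∈ hpiece m e') :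
    hproj m e p = 0 := by
  rcases lt_or_ge e' 0 with h | h
  · rw [eq_zero_of_mem_hpiece h hp, map_zero]
  · rcases lt_or_ge e 0 with h2 | h2
    · simp [hproj, not_le.mpr h2]
    · rw [mem_hpiece_of_nonneg h] at hp
      simp only [hproj, h2, if_true]
      exact (homogeneousComponent_of_mem (m := e.toNat) hp).trans (if_neg (by omega))

lemma homogeneousComponent_mem_hpiece {m : ℕ} (n : ℕ) (p : PolyS m) :
    homogeneousComponent n p ∈ hpiece m n := by
  rw [mem_hpiece_of_nonneg (by omega)]
  exact homogeneousComponent_isHomogeneous _ _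

/-- The variable `X r` is a nonzerodivisor modulo any set of other variables. -/
lemma mem_span_X_of_X_mul_mem {m : ℕ} {s : Set (Fin m)} {r : Fin m} (hr : r ∉ s) {y : PolyS m}
    (h : X r * y ∈ Ideal.span (X '' s : Set (PolyS m))) :
    y ∈ Ideal.span (X '' s : Set (PolyS m)) := by
  rw [mem_ideal_span_X_image] at h ⊢
  intro c hc
  obtain ⟨i, his, hi⟩ := h (Finsupp.single r 1 + c) (by
    rw [mem_support_iff, coeff_X_mul]; exact mem_support_iff.mp hc)
  refine ⟨i, his, ?_⟩
  have : r ≠ i := fun h => hr (h ▸ his)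
  simpa [Finsupp.single_apply, this] using hi

lemma constantCoeff_eq_zero_of_mem_mIdeal {m : ℕ} {p : PolyS m} (hp : p ∈ mIdeal m) :
    constantCoeff p = 0 := by
  have : mIdeal m ≤ RingHom.ker (constantCoeff : PolyS m →+* ℂ) := by
    rw [mIdeal, Ideal.span_le]
    rintro _ ⟨i, rfl⟩
    simp
  exact this hp

/-! ### Graded free modules on a finite graded basis -/

/-- The elements of degree `d` in the free module on generators `p` of degree `deg p`. -/
def homF {m : ℕ} {ι : Type} (deg : ι → ℤ) (d : ℤ) : Submodule ℂ (ι → PolyS m) where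
  carrier := {x | ∀ p, x p ∈ hpiece m (d - deg p)}
  add_mem' hx hy p := add_mem (hx p) (hy p)
  zero_mem' _ := zero_mem _
  smul_mem' c _ hx p := Submodule.smul_mem _ c (hx p)

/-- The `p`-th standard basis vector. -/
def bv {m : ℕ} {ι : Type} (p : ι) : ι → PolyS m := by
  classical exact Pi.single p 1

section Free

variable {m : ℕ} {ι κ : Type}

lemma apply_eq_sum [Fintype ι] {M : Type} [AddCommGroup M] [Module (PolyS m) M]
    (L : (ι → PolyS m) →ₗ[PolyS m] M) (x : ι → PolyS m) : L x = ∑ p, x p • L (bv p) := by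
  classical
  rw [LinearMap.pi_apply_eq_sum_univ]
  refine Finset.sum_congr rfl fun p _ => ?_
  congr 2
  ext1 j
  simp [bv, Pi.single_apply, eq_comm]

lemma eq_sum_bv [Fintype ι] (x : ι → PolyS m) : x = ∑ p, x p • (bv p : ι → PolyS m) :=
  apply_eq_sum LinearMap.id x

lemma bv_mem_homF (deg : ι → ℤ) (p : ι) : (bv p : ι → PolyS m) ∈ homF deg (deg p) := by
  classical
  intro q
  by_cases h : q = p
  · subst h
    simp [bv, one_mem_hpiece]
  · simp [bv, h]

lemma smul_mem_homF {deg : ι → ℤ} {a b : ℤ} {p : PolyS m} {x : ι → PolyS m}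
    (hp : p ∈ hpiece m a) (hx : x ∈ homF deg b) : p • x ∈ homF deg (a + b) := by
  intro q
  have := mul_mem_hpiece hp (hx q)
  rwa [← add_sub_assoc] at this

/-- A linear map sending basis vectors to elements of the same degree is graded. -/
lemma graded_of_bv [Fintype ι] {deg : ι → ℤ} {deg' : κ → ℤ} {L : (ι → PolyS m) →ₗ[PolyS m] (κ → PolyS m)}
    (hL : ∀ p, L (bv p) ∈ homF deg' (deg p)) {d : ℤ} {x : ι → PolyS m} (hx : x ∈ homF deg d) :
    L x ∈ homF deg' d := by
  rw [apply_eq_sum]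
  refine sum_mem fun p _ => ?_
  have := smul_mem_homF (hx p) (hL p)
  rwa [sub_add_cancel] at this

/-- Linear maps between free modules preserve coordinatewise membership in an ideal. -/
lemma map_mem_ideal [Fintype ι] (I : Ideal (PolyS m)) (L : (ι → PolyS m) →ₗ[PolyS m] (κ → PolyS m))
    {x : ι → PolyS m} (hx : ∀ p, x p ∈ I) (q : κ) : L x q ∈ I := by
  rw [apply_eq_sum, Finset.sum_apply]
  exact sum_mem fun p _ => I.mul_mem_right _ (hx p)

lemma exists_linearMap [Fintype ι] {M : Type} [AddCommGroup M] [Module (PolyS m) M] (v : ι → M) :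
    ∃ L : (ι → PolyS m) →ₗ[PolyS m] M, ∀ p, L (bv p) = v p := by
  classical
  refine ⟨Fintype.linearCombination (PolyS m) v, fun p => ?_⟩
  simp [bv, Fintype.linearCombination_apply_single]

lemma linearMap_ext_bv [Finite ι] {M : Type} [AddCommGroup M] [Module (PolyS m) M]
    {L L' : (ι → PolyS m) →ₗ[PolyS m] M} (h : ∀ p, L (bv p) = L' (bv p)) (x : ι → PolyS m) :
    L x = L' x := by
  cases nonempty_fintype ι
  rw [apply_eq_sum L, apply_eq_sum L']
  simp [h]

/-- Projection of a graded free module onto its degree `d` piece. -/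
def projF (deg : ι → ℤ) (d : ℤ) : (ι → PolyS m) →+ (ι → PolyS m) where
  toFun x p := hproj m (d - deg p) (x p)
  map_zero' := by ext1; simp
  map_add' x y := by ext1; simp

lemma projF_same {deg : ι → ℤ} {d : ℤ} {x : ι → PolyS m} (hx : x ∈ homF deg d) :
    projF deg d x = x := funext fun p => hproj_same (hx p)

lemma projF_other {deg : ι → ℤ} {d d' : ℤ} (h : d ≠ d') {x : ι → PolyS m}
    (hx : x ∈ homF deg d') : projF deg d x = 0 :=
  funext fun p => hproj_other (by simpa using h) (hx p)

lemma mem_iSup_homF [Fintype ι] (deg : ι → ℤ) (x : ι → PolyS m) : x ∈ ⨆ d, homF deg d := by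
  rw [eq_sum_bv x]
  refine sum_mem fun p _ => ?_
  rw [← sum_homogeneousComponent (x p), Finset.sum_smul]
  exact sum_mem fun n _ => Submodule.mem_iSup_of_mem _
    (smul_mem_homF (homogeneousComponent_mem_hpiece n (x p)) (bv_mem_homF deg p))

/-- If `h` is graded for a spanning family of pieces on the source and for pieces with
projections `π` on the target, then each projection of an element in the image of `h` lifts
to the piece of the same degree. -/
lemma exists_piece_lift {M N : Type} [AddCommGroup M] [Module ℂ M] [AddCommGroup N]
    (pM : ℤ → Submodule ℂ M) (pN : ℤ → Set N) (π : ℤ → N →+ N)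
    (hsame : ∀ d, ∀ x ∈ pN d, π d x = x) (hother : ∀ d d', d ≠ d' → ∀ x ∈ pN d', π d x = 0)
    (h : M →+ N) (hgr : ∀ d, ∀ x ∈ pM d, h x ∈ pN d) (d : ℤ) (u : M) (hu : u ∈ ⨆ d, pM d) :
    ∃ u' ∈ pM d, h u' = π d (h u) := by
  induction hu using Submodule.iSup_induction' with
  | mem e x hx =>
    by_cases hde : d = e
    · subst hde
      exact ⟨x, hx, (hsame _ _ (hgr _ _ hx)).symm⟩
    · exact ⟨0, zero_mem _, by rw [map_zero, hother d e hde _ (hgr _ _ hx)]⟩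
  | zero => exact ⟨0, zero_mem _, by simp⟩
  | add x y _ _ ihx ihy =>
    obtain ⟨x', hx', hx⟩ := ihx
    obtain ⟨y', hy', hy⟩ := ihy
    exact ⟨x' + y', add_mem hx' hy', by simp [hx, hy]⟩

end Free

/-! ### Isomorphisms modulo the irrelevant ideal -/

section Iso

variable {m : ℕ} {ι κ : Type} [Fintype ι]

lemma constantCoeff_apply (L : (ι → PolyS m) →ₗ[PolyS m] (κ → PolyS m)) (x : ι → PolyS m)
    (q : κ) : constantCoeff (L x q) =
      ∑ p, constantCoeff (x p) * constantCoeff (L (bv p) q) := by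
  rw [apply_eq_sum, Finset.sum_apply, map_sum]
  simp

lemma sum_eq_sum_subtype (P : ι → Prop) [DecidablePred P] (F : ι → ℂ)
    (h : ∀ i, ¬ P i → F i = 0) : ∑ i, F i = ∑ i : {i // P i}, F i := by
  rw [← Finset.sum_subtype (Finset.univ.filter P) (by simp) F, Finset.sum_filter]
  refine Finset.sum_congr rfl fun i _ => ?_
  split_ifs with hi
  · rfl
  · exact h i hi

/-- A graded map whose reduction modulo the irrelevant ideal is bijective matches the numbers
of basis elements in each degree: the reduction is a block matrix indexed by degrees, with
invertible blocks. -/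
lemma card_eq_of_iso_mod [Fintype κ] (degi : ι → ℤ) (degk : κ → ℤ)
    (L : (ι → PolyS m) →ₗ[PolyS m] (κ → PolyS m))
    (hgr : ∀ p, L (bv p) ∈ homF degk (degi p))
    (hsurj : ∀ p : κ, ∃ u : ι → PolyS m,
      ∀ q, constantCoeff ((bv p - L u : κ → PolyS m) q) = 0)
    (hinj : ∀ v : ι → ℂ, (∀ q, constantCoeff (L (fun i => C (v i)) q) = 0) → v = 0) (j : ℤ) :
    Nat.card {p // degi p = j} = Nat.card {p // degk p = j} := by
  classical
  have hM : ∀ p i, degi i ≠ degk p → constantCoeff (L (bv i) p) = 0 := fun p i h =>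
    constantCoeff_eq_zero_of_mem_hpiece (sub_ne_zero.mpr h) (hgr i p)
  let T : ({i // degi i = j} → ℂ) →ₗ[ℂ] ({p // degk p = j} → ℂ) :=
    Matrix.mulVecLin (Matrix.of fun p i => constantCoeff (L (bv i.1) p.1))
  have hT : ∀ v p, T v p = ∑ i : {i // degi i = j}, constantCoeff (L (bv i.1) p.1) * v i :=
    fun v p => rfl
  have hTinj : Function.Injective T := by
    rw [injective_iff_map_eq_zero]
    intro v hv
    let v' : ι → ℂ := fun i => if h : degi i = j then v ⟨i, h⟩ else 0
    have hv' : v' = 0 := by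
      refine hinj _ fun q => ?_
      rw [constantCoeff_apply]
      by_cases hq : degk q = j
      · rw [sum_eq_sum_subtype (fun i => degi i = j)]
        · have := congrFun hv ⟨q, hq⟩
          rw [hT] at this
          rw [← Pi.zero_apply (M := fun _ => ℂ) (⟨q, hq⟩ : {p // degk p = j}), ← this]
          refine Finset.sum_congr rfl fun i _ => ?_
          simp [v', i.2, mul_comm]
        · intro i hi
          simp [v', hi]
      · refine Finset.sum_eq_zero fun i _ => ?_
        by_cases hi : degi i = j
        · rw [hM q i (by rw [hi]; exact fun h => hq h.symm), mul_zero]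
        · simp [v', hi]
    ext i
    have := congrFun hv' i.1
    simpa [v', i.2] using this
  have hTsurj : Function.Surjective T := by
    rw [← LinearMap.range_eq_top, eq_top_iff]
    rintro w -
    rw [pi_eq_sum_univ w]
    refine sum_mem fun p _ => Submodule.smul_mem _ _ ?_
    obtain ⟨u, hu⟩ := hsurj p.1
    refine ⟨fun i => constantCoeff (u i.1), ?_⟩
    ext q
    have h1 := hu q.1
    rw [Pi.sub_apply, map_sub, sub_eq_zero, constantCoeff_apply,
      sum_eq_sum_subtype (fun i => degi i = j)] at h1
    · rw [hT]
      simp_rw [mul_comm (constantCoeff (L _ _))]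
      rw [← h1]
      by_cases hpq : q = p
      · subst hpq; simp [bv]
      · have h2 : q.1 ≠ p.1 := fun h => hpq (Subtype.ext h)
        simp [bv, h2, Ne.symm hpq]
    · intro i hi
      rw [hM _ _ (by rw [q.2]; exact hi), mul_zero]
  have := (LinearEquiv.ofBijective T ⟨hTinj, hTsurj⟩).finrank_eq
  simpa [Nat.card_eq_fintype_card] using this

/-- Graded Nakayama: a graded map of graded free modules that is surjective modulo the
irrelevant ideal is surjective in each degree. Basis vectors are lifted by induction on their
degree. -/
lemma exists_homF_preimage [Fintype κ] (degi : ι → ℤ) (degk : κ → ℤ)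
    (L : (ι → PolyS m) →ₗ[PolyS m] (κ → PolyS m))
    (hgr : ∀ p, L (bv p) ∈ homF degk (degi p))
    (hsurj : ∀ p : κ, ∃ u ∈ homF degi (degk p),
      ∀ q, constantCoeff ((bv p - L u : κ → PolyS m) q) = 0)
    (d : ℤ) (y : κ → PolyS m) (hy : y ∈ homF degk d) : ∃ u ∈ homF degi d, L u = y := by
  have key : ∀ p : κ, ∃ u ∈ homF degi (degk p), L u = bv p := by
    have wf : WellFounded fun a b : κ => degk a < degk b := by
      have : IsTrans κ (fun a b => degk a < degk b) := ⟨fun _ _ _ => lt_trans⟩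
      have : Std.Irrefl (fun a b : κ => degk a < degk b) := ⟨fun _ => lt_irrefl _⟩
      exact Finite.wellFounded_of_trans_of_irrefl _
    intro p
    induction p using wf.induction with
    | _ p ih =>
      obtain ⟨u, hu, hu0⟩ := hsurj p
      have hz : bv p - L u ∈ homF degk (degk p) :=
        sub_mem (bv_mem_homF degk p) (graded_of_bv hgr hu)
      have hq : ∀ q, ∃ w ∈ homF degi (degk p), L w = (bv p - L u : κ → PolyS m) q • bv q := by
        intro q
        rcases lt_or_ge (degk q) (degk p) with h | h
        · obtain ⟨w, hw, hw1⟩ := ih q h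
          refine ⟨(bv p - L u : κ → PolyS m) q • w, ?_, by rw [map_smul, hw1]⟩
          have := smul_mem_homF (hz q) hw
          rwa [sub_add_cancel] at this
        · refine ⟨0, zero_mem _, ?_⟩
          rw [eq_zero_of_mem_hpiece_of_constantCoeff (by omega) (hz q) (hu0 q)]
          simp
      choose w hw hw1 using hq
      refine ⟨u + ∑ q, w q, add_mem hu (sum_mem fun q _ => hw q), ?_⟩
      rw [map_add, map_sum]
      simp_rw [hw1]
      rw [← eq_sum_bv]
      abel
  choose w hw hw1 using key
  refine ⟨∑ p, y p • w p, sum_mem fun p _ => ?_, ?_⟩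
  · have := smul_mem_homF (hy p) (hw p)
    rwa [sub_add_cancel] at this
  · rw [map_sum]
    simp_rw [map_smul, hw1]
    exact (eq_sum_bv y).symm

/-- A graded map that is bijective modulo the irrelevant ideal is injective: it is surjective
by Nakayama, and a surjection between free modules of the same finite rank is injective. -/
lemma injective_of_iso_mod [Fintype κ] (degi : ι → ℤ) (degk : κ → ℤ)
    (L : (ι → PolyS m) →ₗ[PolyS m] (κ → PolyS m))
    (hgr : ∀ p, L (bv p) ∈ homF degk (degi p))
    (hsurj : ∀ p : κ, ∃ u ∈ homF degi (degk p),
      ∀ q, constantCoeff ((bv p - L u : κ → PolyS m) q) = 0)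
    (hinj : ∀ v : ι → ℂ, (∀ q, constantCoeff (L (fun i => C (v i)) q) = 0) → v = 0) :
    Function.Injective L := by
  have hcard := card_eq_of_iso_mod degi degk L hgr
    (fun p => (hsurj p).imp fun u hu => hu.2) hinj
  have e : ι ≃ κ := (Equiv.sigmaFiberEquiv degi).symm.trans
    ((Equiv.sigmaCongrRight fun j => Classical.choice
      (Finite.card_eq.mp (hcard j))).trans (Equiv.sigmaFiberEquiv degk))
  have hs : Function.Surjective L := by
    rw [← LinearMap.range_eq_top, eq_top_iff]
    rintro y -
    rw [eq_sum_bv y]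
    refine sum_mem fun p _ => Submodule.smul_mem _ _ ?_
    obtain ⟨u, -, hu⟩ := exists_homF_preimage degi degk L hgr hsurj _ _ (bv_mem_homF degk p)
    exact ⟨u, hu⟩
  exact OrzechProperty.injective_of_surjective_of_injective
    (LinearEquiv.funCongrLeft (PolyS m) (PolyS m) e.symm).toLinearMap L
    (LinearEquiv.injective _) hs

end Iso

/-! ### The inductive step: minimal covers and their kernels -/

/-- A short exact sequence `A → J → E` of modules with distinguished homogeneous elements
`pA d`, `pJ d`, `pE d` of each degree `d`, where surjectivity and exactness in the middle are
only demanded degree by degree. -/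
structure GradedSES {m : ℕ} {A J E : Type} [AddCommGroup A] [Module (PolyS m) A]
    [AddCommGroup J] [Module (PolyS m) J] [AddCommGroup E] [Module (PolyS m) E]
    (pA : ℤ → Set A) (pJ : ℤ → Set J) (pE : ℤ → Set E)
    (f : A →ₗ[PolyS m] J) (g : J →ₗ[PolyS m] E) : Prop where
  inj : ∀ a, f a = 0 → a = 0
  comp : ∀ a, g (f a) = 0
  f_gr : ∀ d, ∀ a ∈ pA d, f a ∈ pJ d
  g_gr : ∀ d, ∀ x ∈ pJ d, g x ∈ pE d
  g_lift : ∀ d, ∀ e ∈ pE d, ∃ x ∈ pJ d, g x = e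
  exact : ∀ d, ∀ x ∈ pJ d, g x = 0 → ∃ a ∈ pA d, f a = x

/-- A minimal graded free cover of `M`: degreewise surjective, with kernel inside the
irrelevant ideal times the free module. -/
structure GradedCover {m : ℕ} {M ι : Type} [AddCommGroup M] [Module (PolyS m) M]
    (pM : ℤ → Set M) (deg : ι → ℤ) (aug : (ι → PolyS m) →ₗ[PolyS m] M) : Prop where
  gr : ∀ d, ∀ u ∈ homF deg d, aug u ∈ pM d
  lift : ∀ d, ∀ x ∈ pM d, ∃ u ∈ homF deg d, aug u = x
  min : ∀ u, aug u = 0 → ∀ p, u p ∈ mIdeal m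

/-- The degree `d` elements of the kernel of a map out of a graded free module. -/
def kerPiece {m : ℕ} {M ι : Type} [AddCommGroup M] [Module (PolyS m) M]
    (deg : ι → ℤ) (aug : (ι → PolyS m) →ₗ[PolyS m] M) (d : ℤ) : Set (LinearMap.ker aug) :=
  {x | x.1 ∈ homF deg d}

lemma elim_mem_homF {m : ℕ} {ι κ : Type} {degi : ι → ℤ} {degk : κ → ℤ} {d : ℤ}
    {a : ι → PolyS m} {e : κ → PolyS m} (ha : a ∈ homF degi d) (he : e ∈ homF degk d) :
    Sum.elim a e ∈ homF (Sum.elim degi degk) d := by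
  rintro (p | p)
  · exact ha p
  · exact he p

/-- Inclusion of the first summand of a direct sum of free modules. -/
def inlF (m : ℕ) (ι κ : Type) : (ι → PolyS m) →ₗ[PolyS m] (ι ⊕ κ → PolyS m) where
  toFun a := Sum.elim a 0
  map_add' a b := by ext1 (p | p) <;> simp
  map_smul' c a := by ext1 (p | p) <;> simp

lemma inlF_bv {m : ℕ} {ι κ : Type} (p : ι) : inlF m ι κ (bv p) = bv (Sum.inl p) := by
  classical
  ext1 (q | q) <;> simp [inlF, bv, Pi.single_apply]

/-- Restriction to the second summand of a direct sum of free modules. -/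
def sndF (m : ℕ) (ι κ : Type) : (ι ⊕ κ → PolyS m) →ₗ[PolyS m] (κ → PolyS m) :=
  LinearMap.funLeft (PolyS m) (PolyS m) Sum.inr

lemma sndF_bv_inl {m : ℕ} {ι κ : Type} (p : ι) : sndF m ι κ (bv (Sum.inl p)) = 0 := by
  classical
  ext1 q; simp [sndF, bv, LinearMap.funLeft_apply]

lemma sndF_bv_inr {m : ℕ} {ι κ : Type} (p : κ) : sndF m ι κ (bv (Sum.inr p)) = bv p := by
  classical
  ext1 q; simp [sndF, bv, LinearMap.funLeft_apply, Pi.single_apply]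

/-- The horseshoe step. If the generators of `A` are all in degree `k` and those of `E` in
degrees greater than `k`, then the sum of the minimal covers of `A` and `E` is a minimal cover
of `J`; so generators add up, and the kernels form a short exact sequence again. -/
theorem horseshoe_step {m : ℕ} {A J E : Type} [AddCommGroup A] [Module (PolyS m) A]
    [AddCommGroup J] [Module (PolyS m) J] [AddCommGroup E] [Module (PolyS m) E]
    {pA : ℤ → Set A} {pJ : ℤ → Set J} {pE : ℤ → Set E}
    {f : A →ₗ[PolyS m] J} {g : J →ₗ[PolyS m] E} (hS : GradedSES pA pJ pE f g)
    {ιA ιJ ιE : Type} [Fintype ιA] [Fintype ιJ] [Fintype ιE]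
    {degA : ιA → ℤ} {degJ : ιJ → ℤ} {degE : ιE → ℤ}
    {augA : (ιA → PolyS m) →ₗ[PolyS m] A} {augJ : (ιJ → PolyS m) →ₗ[PolyS m] J}
    {augE : (ιE → PolyS m) →ₗ[PolyS m] E}
    (hA : GradedCover pA degA augA) (hJ : GradedCover pJ degJ augJ)
    (hE : GradedCover pE degE augE)
    (k : ℤ) (hkA : ∀ p, degA p = k) (hkE : ∀ p, k < degE p) :
    (∀ j, Nat.card {p // degJ p = j} =
      Nat.card {p // degA p = j} + Nat.card {p // degE p = j}) ∧
    ∃ (f' : LinearMap.ker augA →ₗ[PolyS m] LinearMap.ker augJ)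
      (g' : LinearMap.ker augJ →ₗ[PolyS m] LinearMap.ker augE),
      GradedSES (kerPiece degA augA) (kerPiece degJ augJ) (kerPiece degE augE) f' g' := by
  classical
  have h1 : ∀ p : ιA, ∃ y ∈ homF degJ (degA p), augJ y = f (augA (bv p)) := fun p =>
    hJ.lift _ _ (hS.f_gr _ _ (hA.gr _ _ (bv_mem_homF degA p)))
  have h2 : ∀ p : ιE, ∃ y ∈ homF degJ (degE p), g (augJ y) = augE (bv p) := fun p => by
    obtain ⟨x, hx, hx1⟩ := hS.g_lift _ _ (hE.gr _ _ (bv_mem_homF degE p))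
    obtain ⟨y, hy, hy1⟩ := hJ.lift _ _ hx
    exact ⟨y, hy, by rw [hy1, hx1]⟩
  have h3 : ∀ p : ιJ, ∃ e ∈ homF degE (degJ p), augE e = g (augJ (bv p)) := fun p =>
    hE.lift _ _ (hS.g_gr _ _ (hJ.gr _ _ (bv_mem_homF degJ p)))
  choose vA hvA hvA1 using h1
  choose vE hvE hvE1 using h2
  choose W hW hW1 using h3
  obtain ⟨Φ, hΦ⟩ := exists_linearMap (m := m) (Sum.elim vA vE)
  have hgr : ∀ p, Φ (bv p) ∈ homF degJ (Sum.elim degA degE p) := by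
    rintro (p | p)
    · rw [hΦ]; exact hvA p
    · rw [hΦ]; exact hvE p
  have hK1 : ∀ u, g (augJ (Φ u)) = augE (sndF m ιA ιE u) := by
    refine linearMap_ext_bv (L := g ∘ₗ augJ ∘ₗ Φ) (L' := augE ∘ₗ sndF m ιA ιE) ?_
    rintro (p | p)
    · simp [hΦ, hvA1, hS.comp, sndF_bv_inl]
    · simp [hΦ, hvE1, sndF_bv_inr]
  have hK2 : ∀ a, augJ (Φ (inlF m ιA ιE a)) = f (augA a) := by
    refine linearMap_ext_bv (L := augJ ∘ₗ Φ ∘ₗ inlF m ιA ιE) (L' := f ∘ₗ augA) fun p => ?_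
    simp [inlF_bv, hΦ, hvA1]
  -- a homogeneous `y` with `g (augJ y) = augE e` is hit by `Φ` up to the kernel of `augJ`
  have hK3 : ∀ d, ∀ y ∈ homF degJ d, ∀ e ∈ homF degE d, g (augJ y) = augE e →
      ∃ a ∈ homF degA d, augJ (y - Φ (Sum.elim a e)) = 0 := by
    intro d y hy e he hye
    have hy1 : y - Φ (Sum.elim 0 e) ∈ homF degJ d :=
      sub_mem hy (graded_of_bv hgr (elim_mem_homF (zero_mem _) he))
    obtain ⟨a', ha', ha1⟩ := hS.exact d _ (hJ.gr _ _ hy1) (by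
      rw [map_sub, map_sub, hK1, hye, sub_eq_zero]; rfl)
    obtain ⟨a, ha, rfl⟩ := hA.lift _ _ ha'
    refine ⟨a, ha, ?_⟩
    have : (Sum.elim a e : ιA ⊕ ιE → PolyS m) = (Sum.elim 0 e : ιA ⊕ ιE → PolyS m) + inlF m ιA ιE a := by
      ext1 (p | p) <;> simp [inlF]
    rw [this, map_add, ← sub_sub, map_sub, hK2, ha1, sub_self]
  have hsurj : ∀ p : ιJ, ∃ u ∈ homF (Sum.elim degA degE) (degJ p),
      ∀ q, constantCoeff ((bv p - Φ u : ιJ → PolyS m) q) = 0 := by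
    intro p
    obtain ⟨a, ha, h⟩ := hK3 _ _ (bv_mem_homF degJ p) _ (hW p) (hW1 p).symm
    exact ⟨_, elim_mem_homF ha (hW p), fun q =>
      constantCoeff_eq_zero_of_mem_mIdeal (hJ.min _ h q)⟩
  have hkJ : ∀ p, k ≤ degJ p := by
    intro p
    by_contra! hlt
    obtain ⟨u, hu, hu1⟩ := hsurj p
    have : u = 0 := by
      ext1 (q | q)
      · exact eq_zero_of_mem_hpiece (by simp [hkA, hlt]) (hu (Sum.inl q))
      · exact eq_zero_of_mem_hpiece (by have := hkE q; simp; omega) (hu (Sum.inr q))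
    have h := hu1 p
    simp [this, bv] at h
  have hinj : ∀ v : ιA ⊕ ιE → ℂ, (∀ q, constantCoeff (Φ (fun i => C (v i)) q) = 0) → v = 0 := by
    intro v hv
    have hvE0 : ∀ p, v (Sum.inr p) = 0 := by
      intro p
      set y := Φ (fun i => C (v i)) with hy
      have h0 : augE (sndF m ιA ιE (fun i => C (v i)) - ∑ q, y q • W q) = 0 := by
        rw [map_sub, ← hK1, ← hy, map_sum]
        simp_rw [map_smul, hW1]
        rw [sub_eq_zero]
        exact apply_eq_sum (g ∘ₗ augJ) y
      have := constantCoeff_eq_zero_of_mem_mIdeal (hE.min _ h0 p)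
      simpa [sndF, LinearMap.funLeft_apply, Finset.sum_apply, hv] using this
    have hx : (fun i => C (v i) : ιA ⊕ ιE → PolyS m) =
        inlF m ιA ιE (fun p => C (v (Sum.inl p))) := by
      ext1 (p | p) <;> simp [inlF, hvE0]
    have hdeg : Φ (fun i => C (v i)) ∈ homF degJ k := by
      refine graded_of_bv hgr ?_
      rw [hx]
      refine elim_mem_homF (fun p => ?_) (zero_mem _)
      rw [hkA, sub_self]
      exact C_mem_hpiece m _
    have hzero : Φ (fun i => C (v i)) = 0 := by
      ext1 p
      exact eq_zero_of_mem_hpiece_of_constantCoeff (by have := hkJ p; omega) (hdeg p) (hv p)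
    have hA0 : augA (fun p => C (v (Sum.inl p))) = 0 := by
      apply hS.inj
      rw [← hK2, ← hx, hzero, map_zero]
    ext1 (p | p)
    · simpa using constantCoeff_eq_zero_of_mem_mIdeal (hA.min _ hA0 p)
    · exact hvE0 p
  refine ⟨fun j => ?_, ?_⟩
  · rw [← card_eq_of_iso_mod _ _ Φ hgr (fun p => (hsurj p).imp fun u hu => hu.2) hinj j,
      Nat.card_congr Equiv.subtypeSum, Nat.card_sum]
    rfl
  have hΦlift := exists_homF_preimage _ _ Φ hgr hsurj
  have hΦinj := injective_of_iso_mod _ _ Φ hgr hsurj hinj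
  have hΦsurj : Function.Surjective Φ := by
    rw [← LinearMap.range_eq_top, eq_top_iff]
    rintro y -
    rw [eq_sum_bv y]
    refine sum_mem fun p _ => Submodule.smul_mem _ _ ?_
    obtain ⟨u, -, hu⟩ := hΦlift _ _ (bv_mem_homF degJ p)
    exact ⟨u, hu⟩
  obtain ⟨Ψ, he, he'⟩ : ∃ Ψ : (ιJ → PolyS m) →ₗ[PolyS m] (ιA ⊕ ιE → PolyS m),
      (∀ u, Ψ (Φ u) = u) ∧ ∀ y, Φ (Ψ y) = y :=
    ⟨(LinearEquiv.ofBijective Φ ⟨hΦinj, hΦsurj⟩).symm.toLinearMap,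
      (LinearEquiv.ofBijective Φ ⟨hΦinj, hΦsurj⟩).symm_apply_apply,
      (LinearEquiv.ofBijective Φ ⟨hΦinj, hΦsurj⟩).apply_symm_apply⟩
  obtain ⟨f', hf'⟩ : ∃ f' : LinearMap.ker augA →ₗ[PolyS m] LinearMap.ker augJ,
      ∀ a, (f' a).1 = Φ (inlF m ιA ιE a.1) :=
    ⟨(Φ ∘ₗ inlF m ιA ιE).restrict (fun a ha => by
      rw [LinearMap.mem_ker] at ha ⊢
      rw [LinearMap.comp_apply, hK2, ha, map_zero]), fun a => rfl⟩
  obtain ⟨g', hg'⟩ : ∃ g' : LinearMap.ker augJ →ₗ[PolyS m] LinearMap.ker augE,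
      ∀ y, (g' y).1 = sndF m ιA ιE (Ψ y.1) :=
    ⟨(sndF m ιA ιE ∘ₗ Ψ).restrict (fun y hy => by
      rw [LinearMap.mem_ker] at hy ⊢
      rw [LinearMap.comp_apply, ← hK1, he', hy, map_zero]), fun y => rfl⟩
  refine ⟨f', g', ?_, ?_, ?_, ?_, ?_, ?_⟩
  · intro a ha
    have h0 : Φ (inlF m ιA ιE a.1) = 0 := by rw [← hf', ha]; rfl
    have h1 := hΦinj (h0.trans (map_zero Φ).symm)
    ext p
    exact congrArg _ (congrFun h1 (Sum.inl p))
  · intro a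
    apply Subtype.ext
    rw [hg', hf', he]
    rfl
  · intro d a ha
    change (f' a).1 ∈ homF degJ d
    rw [hf']
    exact graded_of_bv hgr (elim_mem_homF ha (zero_mem _))
  · intro d y hy
    change (g' y).1 ∈ homF degE d
    obtain ⟨u, hu, hu1⟩ := hΦlift d y.1 hy
    rw [hg', ← hu1, he]
    exact fun p => hu (Sum.inr p)
  · intro d x hx
    have hx0 : augE x.1 = 0 := x.2
    have hx1 : -x.1 ∈ homF degE d := neg_mem (show x.1 ∈ homF degE d from hx)
    obtain ⟨a, ha, h⟩ := hK3 d 0 (zero_mem _) (-x.1) hx1 (by simp [hx0])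
    have hmem : Φ (Sum.elim a (-x.1)) ∈ homF degJ d :=
      graded_of_bv hgr (elim_mem_homF ha hx1)
    have hmem' : 0 - Φ (Sum.elim a (-x.1)) ∈ homF degJ d := sub_mem (zero_mem _) hmem
    refine ⟨⟨0 - Φ (Sum.elim a (-x.1)), h⟩, hmem', ?_⟩
    apply Subtype.ext
    have h5 : Ψ (0 - Φ (Sum.elim a (-x.1))) = -Sum.elim a (-x.1) := by
      rw [map_sub, he, map_zero, zero_sub]
    refine (hg' _).trans ?_
    rw [h5]
    ext1 p
    simp [sndF, LinearMap.funLeft_apply]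
  · intro d y hy hy0
    obtain ⟨u, hu, hu1⟩ := hΦlift d y.1 hy
    have hu2 : sndF m ιA ιE u = 0 := by
      have := congrArg Subtype.val hy0
      rwa [hg', ← hu1, he] at this
    have hu3 : u = inlF m ιA ιE (fun p => u (Sum.inl p)) := by
      ext1 (p | p)
      · rfl
      · exact congrFun hu2 p
    have hker : augA (fun p => u (Sum.inl p)) = 0 := by
      apply hS.inj
      rw [← hK2, ← hu3, hu1]
      exact y.2
    refine ⟨⟨_, hker⟩, fun p => hu (Sum.inl p), ?_⟩
    apply Subtype.ext
    rw [hf', ← hu1]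
    exact congrArg Φ hu3.symm

/-! ### Minimal graded free resolutions and the additivity of Betti numbers -/

/-- A minimal graded free resolution of a module with distinguished homogeneous elements
`pM d`, with the bases of the free modules indexed by finite graded types. -/
structure GradedRes (m : ℕ) (M : Type) [AddCommGroup M] [Module (PolyS m) M]
    (pM : ℤ → Set M) where
  ι : ℕ → Type
  fin : ∀ i, Fintype (ι i)
  deg : ∀ i, ι i → ℤ
  d : ∀ i, (ι (i + 1) → PolyS m) →ₗ[PolyS m] (ι i → PolyS m)
  aug : (ι 0 → PolyS m) →ₗ[PolyS m] M
  cover : GradedCover pM (deg 0) aug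
  d_gr : ∀ i e, ∀ u ∈ homF (deg (i + 1)) e, d i u ∈ homF (deg i) e
  aug_d : ∀ u, aug (d 0 u) = 0
  d_d : ∀ i u, d i (d (i + 1) u) = 0
  exact_aug : ∀ x, aug x = 0 → ∃ u, d 0 u = x
  exact_d : ∀ i x, d i x = 0 → ∃ u, d (i + 1) u = x
  min : ∀ i u p, d i u p ∈ mIdeal m

attribute [instance] GradedRes.fin

namespace GradedRes

variable {m : ℕ} {M : Type} [AddCommGroup M] [Module (PolyS m) M] {pM : ℤ → Set M}

/-- The graded Betti number: the number of basis elements of degree `j` in step `i`. -/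
def betti (R : GradedRes m M pM) (i : ℕ) (j : ℤ) : ℕ := Nat.card {p // R.deg i p = j}

/-- The tail of a minimal resolution, as a minimal resolution of the first syzygy module. -/
def shift (R : GradedRes m M pM) :
    GradedRes m (LinearMap.ker R.aug) (kerPiece (R.deg 0) R.aug) where
  ι i := R.ι (i + 1)
  fin i := R.fin (i + 1)
  deg i := R.deg (i + 1)
  d i := R.d (i + 1)
  aug := (R.d 0).codRestrict (LinearMap.ker R.aug) R.aug_d
  cover :=
    { gr := fun e u hu => R.d_gr 0 e u hu
      lift := by
        intro e x hx
        obtain ⟨u, hu⟩ := R.exact_aug x.1 x.2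
        obtain ⟨u', hu', h⟩ := exists_piece_lift (homF (m := m) (R.deg 1))
          (fun e => {x | x ∈ homF (R.deg 0) e}) (projF (R.deg 0))
          (fun _ _ hx => projF_same hx) (fun _ _ hne _ hx => projF_other hne hx)
          (R.d 0).toAddMonoidHom (fun e x hx => R.d_gr 0 e x hx) e u (mem_iSup_homF _ u)
        refine ⟨u', hu', Subtype.ext ?_⟩
        refine h.trans ?_
        change projF (R.deg 0) e (R.d 0 u) = x.1
        rw [hu]
        exact projF_same hx
      min := by
        intro u hu p
        obtain ⟨w, rfl⟩ := R.exact_d 0 u (congrArg Subtype.val hu)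
        exact R.min 1 w p }
  d_gr i := R.d_gr (i + 1)
  aug_d u := Subtype.ext (R.d_d 0 u)
  d_d i := R.d_d (i + 1)
  exact_aug x hx := R.exact_d 0 x (congrArg Subtype.val hx)
  exact_d i := R.exact_d (i + 1)
  min i := R.min (i + 1)

end GradedRes

/-- Additivity of Betti numbers, by induction on the homological degree: the horseshoe step
replaces the short exact sequence by the one of first syzygies. -/
theorem betti_add {m : ℕ} (i : ℕ) : ∀ (k : ℤ) {A J E : Type} [AddCommGroup A]
    [Module (PolyS m) A] [AddCommGroup J] [Module (PolyS m) J] [AddCommGroup E]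
    [Module (PolyS m) E] {pA : ℤ → Set A} {pJ : ℤ → Set J} {pE : ℤ → Set E}
    (f : A →ₗ[PolyS m] J) (g : J →ₗ[PolyS m] E), GradedSES pA pJ pE f g →
    ∀ (RA : GradedRes m A pA) (RJ : GradedRes m J pJ) (RE : GradedRes m E pE),
    (∀ i p, RA.deg i p = k + i) → (∀ i p, k + i < RE.deg i p) →
    ∀ j, RJ.betti i j = RA.betti i j + RE.betti i j := by
  induction i with
  | zero =>
    intro k A J E _ _ _ _ _ _ pA pJ pE f g hS RA RJ RE hA hE
    exact (horseshoe_step hS RA.cover RJ.cover RE.cover k (fun p => by simpa using hA 0 p)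
      (fun p => by simpa using hE 0 p)).1
  | succ i ih =>
    intro k A J E _ _ _ _ _ _ pA pJ pE f g hS RA RJ RE hA hE
    obtain ⟨-, f', g', hS'⟩ := horseshoe_step hS RA.cover RJ.cover RE.cover k
      (fun p => by simpa using hA 0 p) (fun p => by simpa using hE 0 p)
    refine ih (k + 1) f' g' hS' RA.shift RJ.shift RE.shift (fun i p => ?_) (fun i p => ?_)
    · have := hA (i + 1) p
      push_cast at this
      change RA.deg (i + 1) p = _
      omega
    · have := hE (i + 1) p
      push_cast at this
      change _ < RE.deg (i + 1) p
      omega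

/-! ### Hilbert's syzygy theorem -/

/-- The ideal generated by the first `r` variables. -/
def firstVars (m r : ℕ) : Ideal (PolyS m) := Ideal.span (X '' {i : Fin m | i.1 < r})

lemma firstVars_zero (m : ℕ) : firstVars m 0 = ⊥ := by simp [firstVars]

lemma firstVars_top (m : ℕ) : firstVars m m = mIdeal m := by
  simp [firstVars, mIdeal]

lemma mem_firstVars_succ {m r : ℕ} (hr : r < m) {y : PolyS m} (hy : y ∈ firstVars m (r + 1)) :
    ∃ u ∈ firstVars m r, ∃ c, y = u + X ⟨r, hr⟩ * c := by
  have : {i : Fin m | i.1 < r + 1} = insert ⟨r, hr⟩ {i : Fin m | i.1 < r} := by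
    ext i; simp [Fin.ext_iff]; omega
  rw [firstVars, this, Set.image_insert_eq, Ideal.mem_span_insert] at hy
  obtain ⟨c, u, hu, rfl⟩ := hy
  exact ⟨u, hu, c, by ring⟩

lemma firstVars_mono {m r : ℕ} : firstVars m r ≤ firstVars m (r + 1) :=
  Ideal.span_mono (Set.image_mono fun _ h => Nat.lt_succ_of_lt h)

/-- Reducing a free resolution modulo the first `r` variables leaves no homology in homological
degrees greater than `r`. Each further variable is a nonzerodivisor on the reduced complex, and
so creates homology in at most one more degree. -/
lemma exact_mod_firstVars {m : ℕ} {M : Type} [AddCommGroup M] [Module (PolyS m) M]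
    {pM : ℤ → Set M} (R : GradedRes m M pM) (r : ℕ) (hr : r ≤ m) :
    ∀ i, r ≤ i → ∀ z, (∀ p, R.d i z p ∈ firstVars m r) →
      ∃ w, ∀ p, z p - R.d (i + 1) w p ∈ firstVars m r := by
  induction r with
  | zero =>
    intro i _ z hz
    simp only [firstVars_zero, Ideal.mem_bot] at hz
    obtain ⟨w, hw⟩ := R.exact_d i z (funext hz)
    exact ⟨w, fun p => by simp [hw]⟩
  | succ r ih =>
    rintro (_ | i) hi z hz
    · omega
    have ih := ih (by omega)
    have h1 : ∀ p, ∃ u ∈ firstVars m r, ∃ c, R.d (i + 1) z p = u + X ⟨r, hr⟩ * c :=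
      fun p => mem_firstVars_succ hr (hz p)
    choose u hu y hy using h1
    have hz1 : R.d (i + 1) z = u + (X ⟨r, hr⟩ : PolyS m) • y := funext hy
    have hdy : ∀ p, R.d i y p ∈ firstVars m r := by
      intro p
      refine mem_span_X_of_X_mul_mem (r := ⟨r, hr⟩) (by simp) ?_
      have h2 := congrFun (R.d_d i z) p
      rw [hz1, map_add, map_smul] at h2
      have h3 : X ⟨r, hr⟩ * R.d i y p = - R.d i u p :=
        eq_neg_of_add_eq_zero_right h2
      rw [h3]
      exact neg_mem (map_mem_ideal _ _ hu p)
    obtain ⟨w, hw⟩ := ih i (by omega) y hdy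
    obtain ⟨w', hw'⟩ := ih (i + 1) (by omega) (z - (X ⟨r, hr⟩ : PolyS m) • w) (by
      intro p
      have : R.d (i + 1) (z - (X ⟨r, hr⟩ : PolyS m) • w) p =
          u p + X ⟨r, hr⟩ * (y p - R.d (i + 1) w p) := by
        rw [map_sub, map_smul, hz1]
        simp only [Pi.sub_apply, Pi.add_apply, Pi.smul_apply, smul_eq_mul]
        ring
      rw [this]
      exact add_mem (hu p) (Ideal.mul_mem_left _ _ (hw p)))
    refine ⟨w', fun p => ?_⟩
    have : z p - R.d (i + 1 + 1) w' p =
        ((z - (X ⟨r, hr⟩ : PolyS m) • w) p - R.d (i + 1 + 1) w' p) + X ⟨r, hr⟩ * w p := by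
      simp only [Pi.sub_apply, Pi.smul_apply, smul_eq_mul]
      ring
    rw [this]
    refine add_mem (firstVars_mono (hw' p)) (Ideal.mul_mem_right _ _ (Ideal.subset_span ?_))
    exact ⟨⟨r, hr⟩, by simp, rfl⟩

/-- Hilbert's syzygy theorem: a minimal resolution over `m` variables has length at most `m`. -/
lemma betti_eq_zero {m : ℕ} {M : Type} [AddCommGroup M] [Module (PolyS m) M]
    {pM : ℤ → Set M} (R : GradedRes m M pM) {i : ℕ} (hi : m < i) (j : ℤ) :
    R.betti i j = 0 := by
  obtain ⟨i, rfl⟩ : ∃ n, i = n + 1 := ⟨i - 1, by omega⟩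
  have : IsEmpty (R.ι (i + 1)) := by
    refine ⟨fun p => ?_⟩
    obtain ⟨w, hw⟩ := exact_mod_firstVars R m le_rfl i (by omega) (bv p) (fun q => by
      rw [firstVars_top]; exact R.min i _ q)
    have h := hw p
    rw [firstVars_top] at h
    have h1 := constantCoeff_eq_zero_of_mem_mIdeal ((Submodule.sub_mem_iff_left _
      (R.min (i + 1) w p)).mp h)
    simp [bv] at h1
  exact Nat.card_of_isEmpty

/-! ### Comparison with the given form of minimal free resolutions -/

/-- The free module `⊕_j S(-j)^{b j}` in coordinates. -/
def coords (m : ℕ) (b : ℤ → ℕ) (hb : (Function.support b).Finite) :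
    FreeMod m b ≃ₗ[PolyS m] ((Σ j, Fin (b j)) → PolyS m) :=
  LinearEquiv.ofBijective
    { toFun := fun x p => x p.1 p.2
      map_add' := fun x y => by ext1 p; simp
      map_smul' := fun c x => rfl }
    ⟨fun x y h => by
        refine DFinsupp.ext fun j => ?_
        ext1 i
        exact congrFun h ⟨j, i⟩,
      fun y => by
        classical
        refine ⟨DirectSum.mk _ hb.toFinset (fun j i => y ⟨j.1, i⟩), ?_⟩
        ext1 ⟨j, i⟩
        have hj : j ∈ hb.toFinset := by
          simp only [Set.Finite.mem_toFinset, Function.mem_support]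
          have := i.2
          omega
        change (DirectSum.mk (fun j => Fin (b j) → PolyS m) hb.toFinset
          (fun j i => y ⟨j.1, i⟩)) j i = _
        rw [DirectSum.mk_apply_of_mem hj]⟩

lemma coords_apply {m : ℕ} {b : ℤ → ℕ} (hb : (Function.support b).Finite) (x : FreeMod m b)
    (p : Σ j, Fin (b j)) : coords m b hb x p = x p.1 p.2 := rfl

lemma coords_mem_homF {m : ℕ} {b : ℤ → ℕ} (hb : (Function.support b).Finite) (x : FreeMod m b)
    (d : ℤ) : coords m b hb x ∈ homF (fun p : Σ j, Fin (b j) => p.1) d ↔ x ∈ freePiece m b d :=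
  ⟨fun h j i => h ⟨j, i⟩, fun h p => h p.1 p.2⟩

lemma coords_symm_mem {m : ℕ} {b : ℤ → ℕ} (hb : (Function.support b).Finite)
    {y : (Σ j, Fin (b j)) → PolyS m} {d : ℤ} (hy : y ∈ homF (fun p => p.1) d) :
    (coords m b hb).symm y ∈ freePiece m b d := by
  rw [← coords_mem_homF hb, LinearEquiv.apply_symm_apply]
  exact hy

lemma coords_mem_mIdeal {m : ℕ} {b : ℤ → ℕ} (hb : (Function.support b).Finite) {x : FreeMod m b}
    (hx : x ∈ mIdeal m • (⊤ : Submodule (PolyS m) (FreeMod m b))) (p : Σ j, Fin (b j)) :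
    coords m b hb x p ∈ mIdeal m := by
  induction hx using Submodule.smul_induction_on' with
  | smul r hr n _ =>
    rw [map_smul]
    exact Ideal.mul_mem_right _ _ hr
  | add x _ y _ hx hy =>
    rw [map_add]
    exact add_mem hx hy

lemma finite_sigma_fin {b : ℤ → ℕ} (hb : (Function.support b).Finite) :
    Finite (Σ j, Fin (b j)) := by
  have := hb.to_subtype
  refine Finite.of_injective
    (β := Σ j : Function.support b, Fin (b j.1))
    (fun p => ⟨⟨p.1, by have := p.2.2; simp only [Function.mem_support]; omega⟩, p.2⟩) ?_
  rintro ⟨j, i⟩ ⟨j', i'⟩ h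
  simp only [Sigma.mk.injEq, Subtype.mk.injEq] at h
  obtain ⟨rfl, h⟩ := h
  simpa using h

section Internal

variable {m : ℕ} {M : Type} [AddCommGroup M] [Module ℂ M] [Module (PolyS m) M]
  [IsScalarTower ℂ (PolyS m) M]

/-- A graded module has projections onto its pieces. -/
lemma exists_projections (gM : GradedSMod m M) : ∃ π : ℤ → M →+ M,
    (∀ d, ∀ x ∈ gM.piece d, π d x = x) ∧
    ∀ d d', d ≠ d' → ∀ x ∈ gM.piece d', π d x = 0 := by
  classical
  let _ := gM.internal.chooseDecomposition
  refine ⟨fun d => (gM.piece d).subtype.toAddMonoidHom.comp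
    ((DFinsupp.evalAddMonoidHom d).comp (decomposeAddEquiv gM.piece).toAddMonoidHom),
    fun d x hx => decompose_of_mem_same gM.piece hx,
    fun d d' h x hx => decompose_of_mem_ne gM.piece hx h.symm⟩

/-- A surjective graded map onto a graded module is surjective in each degree. -/
lemma exists_lift_of_surjective {N : Type} [AddCommGroup N] [Module ℂ N]
    (pN : ℤ → Submodule ℂ N) (hN : ∀ u, u ∈ ⨆ d, pN d) (gM : GradedSMod m M) (h : N →+ M)
    (hgr : ∀ d, ∀ x ∈ pN d, h x ∈ gM.piece d) (d : ℤ) (u : N) (hu : h u ∈ gM.piece d) :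
    ∃ u' ∈ pN d, h u' = h u := by
  obtain ⟨π, h1, h2⟩ := exists_projections gM
  obtain ⟨u', hu', h3⟩ := exists_piece_lift pN (fun d => (gM.piece d : Set M)) π h1 h2 h hgr d u
    (hN u)
  exact ⟨u', hu', by rw [h3, h1 d _ hu]⟩

lemma mem_iSup_piece (gM : GradedSMod m M) (x : M) : x ∈ ⨆ d, gM.piece d := by
  rw [gM.internal.submodule_iSup_eq_top]
  exact Submodule.mem_top

/-- A minimal free resolution in coordinates. -/
def MinFreeRes.toGradedRes {gM : GradedSMod m M} (F : MinFreeRes m M gM) :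
    GradedRes m M (fun d => (gM.piece d : Set M)) where
  ι i := Σ j, Fin (F.b i j)
  fin i := by
    have := finite_sigma_fin (F.bfin i)
    exact Fintype.ofFinite _
  deg i p := p.1
  d i := (coords m _ (F.bfin i)).toLinearMap ∘ₗ F.diff i ∘ₗ
    (coords m _ (F.bfin (i + 1))).symm.toLinearMap
  aug := F.aug ∘ₗ (coords m _ (F.bfin 0)).symm.toLinearMap
  cover :=
    { gr := fun d u hu => F.graded_aug d _ (coords_symm_mem _ hu)
      lift := by
        have := finite_sigma_fin (F.bfin 0)
        have := Fintype.ofFinite (Σ j, Fin (F.b 0 j))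
        intro d x hx
        obtain ⟨u, rfl⟩ := F.aug_surjective x
        obtain ⟨u', hu', h⟩ := exists_lift_of_surjective
          (homF (m := m) (fun p : Σ j, Fin (F.b 0 j) => p.1)) (mem_iSup_homF _) gM
          (F.aug ∘ₗ (coords m _ (F.bfin 0)).symm.toLinearMap).toAddMonoidHom
          (fun d u hu => F.graded_aug d _ (coords_symm_mem _ hu)) d (coords m _ (F.bfin 0) u)
          (by simpa using hx)
        exact ⟨u', hu', by simpa using h⟩
      min := by
        intro u hu p
        obtain ⟨w, hw⟩ := (F.exact_aug.le hu : _ ∈ LinearMap.range _)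
        have h := coords_mem_mIdeal (F.bfin 0) (F.minimal 0 w) p
        rw [hw] at h
        simpa using h }
  d_gr i e u hu := (coords_mem_homF (F.bfin i) _ _).mpr (F.graded_diff i e _ (coords_symm_mem _ hu))
  aug_d u := by
    have := F.exact_aug.ge (LinearMap.mem_range_self (F.diff 0)
      ((coords m _ (F.bfin 1)).symm u))
    simpa using this
  d_d i u := by
    have := (F.exact i).ge (LinearMap.mem_range_self (F.diff (i + 1))
      ((coords m _ (F.bfin (i + 2))).symm u))
    simpa using this
  exact_aug x hx := by
    obtain ⟨w, hw⟩ := (F.exact_aug.le hx : _ ∈ LinearMap.range _)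
    exact ⟨coords m _ (F.bfin 1) w, by simp [hw]⟩
  exact_d i x hx := by
    have hx' : F.diff i ((coords m _ (F.bfin (i + 1))).symm x) = 0 := by simpa using hx
    obtain ⟨w, hw⟩ := ((F.exact i).le hx' : _ ∈ LinearMap.range _)
    exact ⟨coords m _ (F.bfin (i + 2)) w, by simp [hw]⟩
  min i u p := coords_mem_mIdeal (F.bfin i) (F.minimal i _) p

lemma MinFreeRes.betti_toGradedRes {gM : GradedSMod m M} (F : MinFreeRes m M gM) (i : ℕ)
    (j : ℤ) : F.toGradedRes.betti i j = F.b i j :=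
  (Nat.card_congr (Equiv.sigmaSubtype (β := fun j => Fin (F.b i j)) j)).trans (Nat.card_fin _)

/-- By the syzygy theorem, only finitely many values `j - i` occur in a Betti table, so its
regularity is an honest supremum. -/
lemma MinFreeRes.bddAbove {gM : GradedSMod m M} (F : MinFreeRes m M gM) :
    BddAbove {z : ℤ | ∃ i j, F.b i j ≠ 0 ∧ z = j - (i : ℤ)} := by
  refine Set.Finite.bddAbove (((Set.finite_Iic m).biUnion (fun i _ =>
    (F.bfin i).image (fun j => j - (i : ℤ)))).subset ?_)
  rintro z ⟨i, j, h, rfl⟩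
  simp only [Set.mem_iUnion]
  refine ⟨i, ?_, j, h, rfl⟩
  by_contra! hi
  exact h ((F.betti_toGradedRes i j).symm.trans (betti_eq_zero _ (by simpa using hi) j))

end Internal

/-- Given a short exact sequence `0 → A → J → E → 0` of graded modules
where `A` has a pure linear resolution with degree sequence `(k+1, …, k+N)` and the
minimal degree sequence of `E` satisfies `min{j : β_{i,j}(E) ≠ 0} > k+1+i` for every `i`,
one has `β_{i,j}(J) = β_{i,j}(A) + β_{i,j}(E)` for all `i, j`; in particular
`reg J = max (reg A) (reg E)`. -/
theorem stmt11 (m N k : ℕ)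
    (A J E : Type) [AddCommGroup A] [Module ℂ A] [Module (PolyS m) A]
    [IsScalarTower ℂ (PolyS m) A]
    [AddCommGroup J] [Module ℂ J] [Module (PolyS m) J] [IsScalarTower ℂ (PolyS m) J]
    [AddCommGroup E] [Module ℂ E] [Module (PolyS m) E] [IsScalarTower ℂ (PolyS m) E]
    (gA : GradedSMod m A) (gJ : GradedSMod m J) (gE : GradedSMod m E)
    (f : A →ₗ[PolyS m] J) (g : J →ₗ[PolyS m] E)
    (hf : Function.Injective f) (hg : Function.Surjective g)
    (hfg : LinearMap.ker g = LinearMap.range f)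
    (hfgr : ∀ (j : ℤ) (a : A), a ∈ gA.piece j → f a ∈ gJ.piece j)
    (hggr : ∀ (j : ℤ) (b : J), b ∈ gJ.piece j → g b ∈ gE.piece j)
    (FA : MinFreeRes m A gA) (FJ : MinFreeRes m J gJ) (FE : MinFreeRes m E gE)
    (hApure : ∀ (i : ℕ) (j : ℤ), FA.b i j ≠ 0 → i < N ∧ j = (k : ℤ) + 1 + i)
    (hAfull : ∀ i : ℕ, i < N → FA.b i ((k : ℤ) + 1 + i) ≠ 0)
    (hEmin : ∀ (i : ℕ) (j : ℤ), FE.b i j ≠ 0 → (k : ℤ) + 1 + i < j) :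
    (∀ (i : ℕ) (j : ℤ), FJ.b i j = FA.b i j + FE.b i j) ∧
    regOf FJ.b = max (regOf FA.b) (regOf FE.b) := by
  have hS : GradedSES (fun d => (gA.piece d : Set A)) (fun d => (gJ.piece d : Set J))
      (fun d => (gE.piece d : Set E)) f g := by
    have hcomp : ∀ a, g (f a) = 0 := fun a => hfg.ge (LinearMap.mem_range_self f a)
    refine ⟨fun a ha => hf (ha.trans (map_zero f).symm), hcomp, hfgr, hggr, ?_, ?_⟩
    · intro d e he
      obtain ⟨x, rfl⟩ := hg e
      exact exists_lift_of_surjective gJ.piece (mem_iSup_piece gJ) gE g.toAddMonoidHom hggr d x he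
    · intro d x hx hgx
      obtain ⟨a, rfl⟩ := (hfg.le hgx : x ∈ LinearMap.range f)
      exact exists_lift_of_surjective gA.piece (mem_iSup_piece gA) gJ f.toAddMonoidHom hfgr d a hx
  have hb : ∀ (i : ℕ) (j : ℤ), FJ.b i j = FA.b i j + FE.b i j := by
    intro i j
    simp only [← MinFreeRes.betti_toGradedRes]
    refine betti_add i (k + 1) f g hS _ _ _ (fun i p => ?_) (fun i p => ?_) j
    · have h : 0 < FA.b i p.1 := p.2.pos
      exact (hApure i p.1 h.ne').2
    · have h : 0 < FE.b i p.1 := p.2.pos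
      exact hEmin i p.1 h.ne'
  refine ⟨hb, ?_⟩
  have hset : {z : ℤ | ∃ i j, FJ.b i j ≠ 0 ∧ z = j - (i : ℤ)} =
      {z : ℤ | ∃ i j, FA.b i j ≠ 0 ∧ z = j - (i : ℤ)} ∪
      {z : ℤ | ∃ i j, FE.b i j ≠ 0 ∧ z = j - (i : ℤ)} := by
    ext z
    simp only [Set.mem_union, Set.mem_ofPred_eq]
    constructor
    · rintro ⟨i, j, h, hz⟩
      rw [hb] at h
      by_cases h0 : FA.b i j = 0
      · exact Or.inr ⟨i, j, by omega, hz⟩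
      · exact Or.inl ⟨i, j, h0, hz⟩
    · rintro (⟨i, j, h, hz⟩ | ⟨i, j, h, hz⟩)
      · exact ⟨i, j, by rw [hb]; omega, hz⟩
      · exact ⟨i, j, by rw [hb]; omega, hz⟩
  have hposA : ∀ z ∈ {z : ℤ | ∃ i j, FA.b i j ≠ 0 ∧ z = j - (i : ℤ)}, 0 ≤ z := by
    rintro z ⟨i, j, h, rfl⟩
    have := (hApure i j h).2
    omega
  have hposE : ∀ z ∈ {z : ℤ | ∃ i j, FE.b i j ≠ 0 ∧ z = j - (i : ℤ)}, 0 ≤ z := by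
    rintro z ⟨i, j, h, rfl⟩
    have := hEmin i j h
    omega
  have hbA := FA.bddAbove
  have hbE := FE.bddAbove
  unfold regOf
  rw [hset]
  generalize {z : ℤ | ∃ i j, FA.b i j ≠ 0 ∧ z = j - (i : ℤ)} = SA at *
  generalize {z : ℤ | ∃ i j, FE.b i j ≠ 0 ∧ z = j - (i : ℤ)} = SE at *
  have hnonneg : ∀ s : Set ℤ, BddAbove s → (∀ z ∈ s, 0 ≤ z) → 0 ≤ sSup s := by
    intro s hs h
    rcases s.eq_empty_or_nonempty with rfl | ⟨z, hz⟩
    · exact Int.csSup_empty.ge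
    · exact (h z hz).trans (le_csSup hs hz)
  -- the supremum of the empty set is `0` here, which is harmless: all values are nonnegative
  rcases SA.eq_empty_or_nonempty with rfl | hA
  · rw [Set.empty_union, Int.csSup_empty, max_eq_right (hnonneg SE hbE hposE)]
  rcases SE.eq_empty_or_nonempty with rfl | hE
  · rw [Set.union_empty, Int.csSup_empty, max_eq_left (hnonneg SA hbA hposA)]
  exact csSup_union hbA hA hbE hE

end
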